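/- arXiv:1712.08306 — 2 statements merged into one kernel-verified Lean document; each statement's English description precedes it below -/
import Mathlib

section
/- For all integers i, j and every integer k ≥ 1, the bimoment determinants satisfy the bilinear identity E_k^{(i,j+1)} F_{k−1}^{(i,j)} = G_k^{(j,i)} G_{k−1}^{(i,j+1)} + E_k^{(i,j)} F_{k−1}^{(i,j+1)}. -/
open Finset

/-- Single moments `α_i = Σ_p ζ_p^i a_p`. -/
noncomputable def alphaM (n : ℕ) (ζ a : Fin n → ℝ) (i : ℤ) : ℝ :=
  ∑ p : Fin n, ζ p ^ i * a p

/-- Bimoments `I_{i,j} = Σ_p Σ_q ζ_p^i ζ_q^j / (ζ_p + ζ_q) a_p a_q`. -/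
noncomputable def Imom (n : ℕ) (ζ a : Fin n → ℝ) (i j : ℤ) : ℝ :=
  ∑ p : Fin n, ∑ q : Fin n, ζ p ^ i * ζ q ^ j / (ζ p + ζ q) * (a p * a q)

/-- `F_k^{(i,j)} = det (I_{i+r,j+s})_{0 ≤ r,s ≤ k-1}`, with `F_0 = 1` and `F_k = 0` for `k < 0`. -/
noncomputable def Fdet (n : ℕ) (ζ a : Fin n → ℝ) (i j k : ℤ) : ℝ :=
  if k < 0 then 0
  else Matrix.det (Matrix.of fun r s : Fin k.toNat =>
    Imom n ζ a (i + ((r : ℕ) : ℤ)) (j + ((s : ℕ) : ℤ)))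

/-- `G_k^{(i,j)}`: first column `(α_{i-1}, …, α_{i+k-2})ᵀ`, remaining block
`(I_{i+r,j+s})_{0 ≤ r ≤ k-1, 0 ≤ s ≤ k-2}`; `G_1 = α_{i-1}` and `G_k = 0` for `k < 1`. -/
noncomputable def Gdet (n : ℕ) (ζ a : Fin n → ℝ) (i j k : ℤ) : ℝ :=
  if k < 1 then 0
  else Matrix.det (Matrix.of fun r s : Fin k.toNat =>
    if (s : ℕ) = 0 then alphaM n ζ a (i - 1 + ((r : ℕ) : ℤ))
    else Imom n ζ a (i + ((r : ℕ) : ℤ)) (j + (((s : ℕ) - 1 : ℕ) : ℤ)))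

/-- `E_k^{(i,j)}`: `(1,1)` entry `0`, first row `(0, α_{j-1}, …, α_{j+k-3})`, first column
`(0, α_{i-1}, …, α_{i+k-3})ᵀ`, remaining block `(I_{i+r,j+s})_{0 ≤ r,s ≤ k-2}`;
`E_k = 0` for `k < 2`. -/
noncomputable def Edet (n : ℕ) (ζ a : Fin n → ℝ) (i j k : ℤ) : ℝ :=
  if k < 2 then 0
  else Matrix.det (Matrix.of fun r s : Fin k.toNat =>
    if (r : ℕ) = 0 then
      (if (s : ℕ) = 0 then 0 else alphaM n ζ a (j - 1 + (((s : ℕ) - 1 : ℕ) : ℤ)))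
    else if (s : ℕ) = 0 then alphaM n ζ a (i - 1 + (((r : ℕ) - 1 : ℕ) : ℤ))
    else Imom n ζ a (i + (((r : ℕ) - 1 : ℕ) : ℤ)) (j + (((s : ℕ) - 1 : ℕ) : ℤ)))

/-! The vector of signed maximal minors of an `N × (N + 1)` matrix is orthogonal to all of its rows.
Pairing it with a linear functional of the columns that vanishes on all but three of them leaves a
three-term relation between minors. For a zero-cornered matrix of bimoments bordered by single
moments, with one column more than rows, this relation is the identity between `E`, `F` and `G`. -/

open Matrix

section Minors

variable {R : Type*} [CommRing R]

theorem mulVec_signed_maximal_minors_eq_zero {N : ℕ} (M : Matrix (Fin N) (Fin (N + 1)) R) :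
    M *ᵥ (fun x => (-1) ^ (x : ℕ) * (M.submatrix id x.succAbove).det) = 0 := by
  ext i
  have repeated_row : (of (Fin.cons (M i) M) : Matrix (Fin (N + 1)) (Fin (N + 1)) R).det = 0 :=
    det_zero_of_row_eq (Fin.succ_ne_zero i).symm rfl
  rw [det_succ_row_zero] at repeated_row
  refine (Finset.sum_congr rfl fun x _ => ?_).trans repeated_row
  exact (mul_left_comm _ _ _).trans (mul_assoc _ _ _).symm

theorem sum_signed_maximal_minor_mul_det_updateCol_eq_zero {N : ℕ} {ι : Type*} [Fintype ι]
    [DecidableEq ι] (M : Matrix (Fin N) (Fin (N + 1)) R) (A : Matrix ι ι R) (f : ι → Fin N)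
    (t : ι) :
    ∑ x : Fin (N + 1), (-1) ^ (x : ℕ) * (M.submatrix id x.succAbove).det *
      (A.updateCol t fun r => M (f r) x).det = 0 := by
  have column_relation :
      ∑ x : Fin (N + 1), ((-1) ^ (x : ℕ) * (M.submatrix id x.succAbove).det) •
        (fun r => M (f r) x) = 0 := by
    ext r
    simpa [mulVec, dotProduct, mul_comm] using
      congr_fun (mulVec_signed_maximal_minors_eq_zero M) (f r)
  have cramer_relation := congr_arg A.cramer column_relation
  simp only [map_sum, map_smul, map_zero] at cramer_relation
  simpa [cramer_apply] using congr_fun cramer_relation t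

theorem det_submatrix_succ_eq_neg_one_pow_mul_det_updateCol {m : ℕ}
    (M : Matrix (Fin (m + 1)) (Fin (m + 2)) R) :
    (M.submatrix id Fin.succ).det = (-1) ^ m *
      ((M.submatrix id Fin.castSucc).updateCol 0 fun r => M r (Fin.last (m + 1))).det := by
  set A := (M.submatrix id Fin.castSucc).updateCol 0 fun r => M r (Fin.last (m + 1))
  have rotate_columns : M.submatrix id Fin.succ = A.submatrix id (finRotate (m + 1)) := by
    ext r s
    cases s using Fin.lastCases with
    | last => simp [A]
    | cast s => simp [A, finRotate_apply]
  simp [rotate_columns, det_permute']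

theorem det_three_term_plucker {m : ℕ} (M : Matrix (Fin (m + 2)) (Fin (m + 3)) R)
    (f : Fin (m + 1) → Fin (m + 2)) :
    (M.submatrix id (Fin.succAbove 1)).det * (M.submatrix f fun s => s.castSucc.succ).det =
      (M.submatrix id Fin.succ).det * (M.submatrix f fun s => (Fin.succAbove 1 s).castSucc).det +
        (M.submatrix id Fin.castSucc).det * (M.submatrix f fun s => s.succ.succ).det := by
  set A := M.submatrix f fun s : Fin (m + 1) => s.castSucc.succ
  have first_column :
      (A.updateCol 0 fun r => M (f r) 0) = M.submatrix f fun s => (Fin.succAbove 1 s).castSucc := by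
    ext r s
    cases s using Fin.cases <;> simp [A]
  have second_column : (A.updateCol 0 fun r => M (f r) 1) = A := updateCol_eq_self A 0
  have middle_column (s : Fin m) :
      (A.updateCol 0 fun r => M (f r) s.castSucc.succ.succ).det = 0 :=
    det_updateCol_eq_zero (M := A) (Fin.succ_ne_zero s)
  have last_column :
      (M.submatrix f fun s => s.succ.succ).det =
        (-1) ^ m * (A.updateCol 0 fun r => M (f r) (Fin.last (m + 2))).det :=
    det_submatrix_succ_eq_neg_one_pow_mul_det_updateCol (M.submatrix f Fin.succ)
  have relation := sum_signed_maximal_minor_mul_det_updateCol_eq_zero M A f 0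
  rw [Fin.sum_univ_succ, Fin.sum_univ_succ, Fin.sum_univ_castSucc] at relation
  have three_terms :
      (M.submatrix id Fin.succ).det * (M.submatrix f fun s => (Fin.succAbove 1 s).castSucc).det +
        (-((M.submatrix id (Fin.succAbove 1)).det * A.det) +
          (-1) ^ (m + 2) * (M.submatrix id Fin.castSucc).det *
            (A.updateCol 0 fun r => M (f r) (Fin.last (m + 2))).det) = 0 := by
    simpa [first_column, second_column, middle_column] using relation
  rw [last_column]
  linear_combination -three_terms

end Minors

section Bimoments

variable {R : Type*} [CommRing R]

/-- The determinant `F_k^{(i,j)}` for an arbitrary array `I` of bimoments. -/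
def bimomentDet (I : ℤ → ℤ → R) (i j : ℤ) (k : ℕ) : R :=
  (of fun r s : Fin k => I (i + (r : ℕ)) (j + (s : ℕ))).det

/-- The determinant `G_k^{(i,j)}` for an arbitrary array `I` of bimoments bordered by a column of
moments `α`, with `G_0 = 0`. -/
def columnBorderedDet (α : ℤ → R) (I : ℤ → ℤ → R) (i j : ℤ) : ℕ → R
  | 0 => 0
  | k + 1 => (of fun r : Fin (k + 1) =>
      (Fin.cons (α (i - 1 + (r : ℕ))) fun s : Fin k => I (i + (r : ℕ)) (j + (s : ℕ)) :
        Fin (k + 1) → R)).det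

/-- The `k × l` block `(I_{i+r,j+s})` of bimoments bordered by a first row of moments `β` and a
first column of moments `α` that meet in a zero corner. It is allowed to be rectangular because the
determinant identity comes from the minors of the case `l = k + 1`. -/
def borderedMatrix (α β : ℤ → R) (I : ℤ → ℤ → R) (i j : ℤ) (k l : ℕ) :
    Matrix (Fin (k + 1)) (Fin (l + 1)) R :=
  of (Fin.cons (Fin.cons 0 fun s : Fin l => β (j - 1 + (s : ℕ))) fun r : Fin k =>
    Fin.cons (α (i - 1 + (r : ℕ))) fun s : Fin l => I (i + (r : ℕ)) (j + (s : ℕ)))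

/-- The determinant `E_k^{(i,j)}` for an arbitrary array `I` of bimoments bordered by a row of
moments `β` and a column of moments `α`, with `E_0 = 0`. -/
def borderedDet (α β : ℤ → R) (I : ℤ → ℤ → R) (i j : ℤ) : ℕ → R
  | 0 => 0
  | k + 1 => (borderedMatrix α β I i j k k).det

variable (α β : ℤ → R) (I : ℤ → ℤ → R) (i j : ℤ)

theorem borderedDet_one : borderedDet α β I i j 1 = 0 := by
  simp [borderedDet, borderedMatrix]

variable (k l : ℕ)

theorem borderedMatrix_delete_last_col :
    (borderedMatrix α β I i j k (l + 1)).submatrix id Fin.castSucc =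
      borderedMatrix α β I i j k l := by
  ext r s
  cases r using Fin.cases <;> cases s using Fin.cases <;> simp [borderedMatrix]

theorem borderedMatrix_delete_col_one :
    (borderedMatrix α β I i j k (l + 1)).submatrix id (Fin.succAbove 1) =
      borderedMatrix α β I i (j + 1) k l := by
  ext r s
  cases r using Fin.cases <;> cases s using Fin.cases <;>
    simp [borderedMatrix, add_comm, add_left_comm, sub_eq_add_neg]

theorem det_borderedMatrix_delete_col_zero :
    ((borderedMatrix α β I i j k (k + 1)).submatrix id Fin.succ).det =
      columnBorderedDet β (flip I) j i (k + 1) := by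
  rw [← det_transpose, columnBorderedDet]
  congr 1
  ext r s
  cases s using Fin.cases <;> simp [borderedMatrix, flip]

theorem det_borderedMatrix_delete_row_zero_cols_one_last :
    ((borderedMatrix α β I i j (k + 1) (k + 2)).submatrix Fin.succ
      fun s => (Fin.succAbove 1 s).castSucc).det = columnBorderedDet α I i (j + 1) (k + 1) := by
  rw [columnBorderedDet]
  congr 1
  ext r s
  cases s using Fin.cases <;> simp [borderedMatrix, add_comm, add_left_comm]

theorem det_borderedMatrix_delete_row_zero_cols_zero_last :
    ((borderedMatrix α β I i j k (k + 1)).submatrix Fin.succ fun s => s.castSucc.succ).det =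
      bimomentDet I i j k := rfl

theorem det_borderedMatrix_delete_row_zero_cols_zero_one :
    ((borderedMatrix α β I i j k (k + 1)).submatrix Fin.succ fun s => s.succ.succ).det =
      bimomentDet I i (j + 1) k := by
  rw [bimomentDet]
  congr 1
  ext r s
  simp [borderedMatrix, add_comm, add_left_comm]

theorem stmt_9_general :
    borderedDet α β I i (j + 1) (k + 1) * bimomentDet I i j k =
      columnBorderedDet β (flip I) j i (k + 1) * columnBorderedDet α I i (j + 1) k +
        borderedDet α β I i j (k + 1) * bimomentDet I i (j + 1) k := by
  cases k with
  | zero => simp [borderedDet_one, columnBorderedDet]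
  | succ m =>
    have minors := det_three_term_plucker (borderedMatrix α β I i j (m + 1) (m + 2)) Fin.succ
    rwa [borderedMatrix_delete_col_one, borderedMatrix_delete_last_col,
      det_borderedMatrix_delete_col_zero, det_borderedMatrix_delete_row_zero_cols_one_last,
      det_borderedMatrix_delete_row_zero_cols_zero_last,
      det_borderedMatrix_delete_row_zero_cols_zero_one] at minors

end Bimoments

section Moments

variable (n : ℕ) (ζ a : Fin n → ℝ) (i j : ℤ)

theorem flip_Imom : flip (Imom n ζ a) = Imom n ζ a := by
  ext i j
  rw [flip, Imom, Finset.sum_comm]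
  simp only [Imom, mul_comm, add_comm]

theorem Fdet_natCast (k : ℕ) : Fdet n ζ a i j k = bimomentDet (Imom n ζ a) i j k := by
  simp [Fdet, bimomentDet]

theorem Gdet_natCast (k : ℕ) :
    Gdet n ζ a i j k = columnBorderedDet (alphaM n ζ a) (Imom n ζ a) i j k := by
  cases k with
  | zero => simp [Gdet, columnBorderedDet]
  | succ k =>
    rw [Gdet, if_neg (by omega), Int.toNat_natCast, columnBorderedDet]
    congr 1
    ext r s
    cases s using Fin.cases <;> simp

theorem Edet_natCast (k : ℕ) :
    Edet n ζ a i j k = borderedDet (alphaM n ζ a) (alphaM n ζ a) (Imom n ζ a) i j k := by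
  match k with
  | 0 => simp [Edet, borderedDet]
  | 1 => simp [Edet, borderedDet_one]
  | k + 2 =>
    rw [Edet, if_neg (by omega), Int.toNat_natCast, borderedDet]
    congr 1
    ext r s
    cases r using Fin.cases <;> cases s using Fin.cases <;> simp [borderedMatrix]

end Moments

/-- Lemma 2.8, identity (2.18): for all `i, j ∈ ℤ` and `k ≥ 1`,
`E_k^{(i,j+1)} F_{k-1}^{(i,j)} = G_k^{(j,i)} G_{k-1}^{(i,j+1)} + E_k^{(i,j)} F_{k-1}^{(i,j+1)}`. -/
theorem stmt_9 (n : ℕ) (hn : 1 ≤ n) (ζ a : Fin n → ℝ)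
    (hζ0 : ∀ p, 0 < ζ p) (hζmono : StrictMono ζ) (ha : ∀ p, 0 < a p)
    (i j k : ℤ) (hk : 1 ≤ k) :
    Edet n ζ a i (j + 1) k * Fdet n ζ a i j (k - 1) =
      Gdet n ζ a j i k * Gdet n ζ a i (j + 1) (k - 1) +
        Edet n ζ a i j k * Fdet n ζ a i (j + 1) (k - 1) := by
  obtain ⟨m, rfl⟩ : ∃ m : ℕ, k = (m + 1 : ℕ) := ⟨(k - 1).toNat, by omega⟩
  have hm : ((m + 1 : ℕ) : ℤ) - 1 = (m : ℕ) := by simp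
  simpa only [hm, Edet_natCast, Fdet_natCast, Gdet_natCast, flip_Imom] using
    stmt_9_general (alphaM n ζ a) (alphaM n ζ a) (Imom n ζ a) i j m
end

section
/- Under the time evolution c_p(t) = c_p(0) e^{ξ_p t}, for every integer j, every integer k ≥ 1 and every t ∈ ℝ, the tau and sigma determinants satisfy the bilinear ODE system: (d/dt τ_k^{(j,j)}) τ_{k−1}^{(j,j)} − τ_k^{(j,j)} (d/dt τ_{k−1}^{(j,j)}) = ( σ_k^{(j,j)} )², and (d²/dt² τ_k^{(j,j)}) τ_k^{(j,j)} − ( d/dt τ_k^{(j,j)} )² = −2 σ_{k+1}^{(j,j)} σ_k^{(j,j)}. -/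
open Finset

/-- Single moments `β_i = Σ_p ξ_p^i c_p`. -/
noncomputable def betaM (n : ℕ) (ξ c : Fin n → ℝ) (i : ℤ) : ℝ :=
  ∑ p : Fin n, ξ p ^ i * c p

/-- Bimoments `J_{i,j} = Σ_p Σ_q ξ_p^i ξ_q^j / (ξ_p + ξ_q) c_p c_q`. -/
noncomputable def Jmom (n : ℕ) (ξ c : Fin n → ℝ) (i j : ℤ) : ℝ :=
  ∑ p : Fin n, ∑ q : Fin n, ξ p ^ i * ξ q ^ j / (ξ p + ξ q) * (c p * c q)

/-- `τ_k^{(i,j)} = det (J_{i+r,j+s})_{0 ≤ r,s ≤ k-1}`, with `τ_0 = 1` and `τ_k = 0` for `k < 0`. -/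
noncomputable def tauDet (n : ℕ) (ξ c : Fin n → ℝ) (i j k : ℤ) : ℝ :=
  if k < 0 then 0
  else Matrix.det (Matrix.of fun r s : Fin k.toNat =>
    Jmom n ξ c (i + ((r : ℕ) : ℤ)) (j + ((s : ℕ) : ℤ)))

/-- `σ_k^{(i,j)}`: first column `(β_i, …, β_{i+k-1})ᵀ`, remaining block
`(J_{i+r,j+s})_{0 ≤ r ≤ k-1, 0 ≤ s ≤ k-2}`; `σ_1 = β_i` and `σ_k = 0` for `k < 1`. -/
noncomputable def sigmaDet (n : ℕ) (ξ c : Fin n → ℝ) (i j k : ℤ) : ℝ :=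
  if k < 1 then 0
  else Matrix.det (Matrix.of fun r s : Fin k.toNat =>
    if (s : ℕ) = 0 then betaM n ξ c (i + ((r : ℕ) : ℤ))
    else Jmom n ξ c (i + ((r : ℕ) : ℤ)) (j + (((s : ℕ) - 1 : ℕ) : ℤ)))

/-- `ρ_k^{(i,j)}`: `(1,1)` entry `0`, first row `(0, β_j, …, β_{j+k-2})`, first column
`(0, β_i, …, β_{i+k-2})ᵀ`, remaining block `(J_{i+r,j+s})_{0 ≤ r,s ≤ k-2}`;
`ρ_k = 0` for `k < 2`. -/
noncomputable def rhoDet (n : ℕ) (ξ c : Fin n → ℝ) (i j k : ℤ) : ℝ :=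
  if k < 2 then 0
  else Matrix.det (Matrix.of fun r s : Fin k.toNat =>
    if (r : ℕ) = 0 then
      (if (s : ℕ) = 0 then 0 else betaM n ξ c (j + (((s : ℕ) - 1 : ℕ) : ℤ)))
    else if (s : ℕ) = 0 then betaM n ξ c (i + (((r : ℕ) - 1 : ℕ) : ℤ))
    else Jmom n ξ c (i + (((r : ℕ) - 1 : ℕ) : ℤ)) (j + (((s : ℕ) - 1 : ℕ) : ℤ)))

/-- `ω_k^{(i,j)}`: the `k×k` determinant with rows indexed by `i, …, i+k-1` and columns
`J_{·,j}, …, J_{·,j+k-2}, J_{·,j+k}` (the last column index jumps an extra step);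
`ω_1 = J_{i,j+1}` and `ω_k = 0` for `k < 1`. -/
noncomputable def omegaDet (n : ℕ) (ξ c : Fin n → ℝ) (i j k : ℤ) : ℝ :=
  if k < 1 then 0
  else Matrix.det (Matrix.of fun r s : Fin k.toNat =>
    Jmom n ξ c (i + ((r : ℕ) : ℤ))
      (j + (if (s : ℕ) = k.toNat - 1 then ((s : ℕ) : ℤ) + 1 else ((s : ℕ) : ℤ))))

/-- `ν_k^{(i,j)}`: like `ρ_k^{(i,j)}` but with the last column index jumping an extra step,
i.e. first row `(0, β_j, …, β_{j+k-3}, β_{j+k-1})` and last `J`-column `(J_{i+r,j+k-1})_r`;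
`ν_k = 0` for `k < 2`. -/
noncomputable def nuDet (n : ℕ) (ξ c : Fin n → ℝ) (i j k : ℤ) : ℝ :=
  if k < 2 then 0
  else Matrix.det (Matrix.of fun r s : Fin k.toNat =>
    if (r : ℕ) = 0 then
      (if (s : ℕ) = 0 then 0
       else betaM n ξ c
         (j + (if (s : ℕ) = k.toNat - 1 then ((s : ℕ) : ℤ) else ((s : ℕ) : ℤ) - 1)))
    else if (s : ℕ) = 0 then betaM n ξ c (i + (((r : ℕ) - 1 : ℕ) : ℤ))
    else Jmom n ξ c (i + (((r : ℕ) - 1 : ℕ) : ℤ))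
      (j + (if (s : ℕ) = k.toNat - 1 then ((s : ℕ) : ℤ) else ((s : ℕ) : ℤ) - 1)))

/-- Time-dependent weights `c_p(t) = c_p(0) e^{ξ_p t}`. -/
noncomputable def cT (n : ℕ) (ξ c0 : Fin n → ℝ) (t : ℝ) : Fin n → ℝ :=
  fun p => c0 p * Real.exp (ξ p * t)

/-!
Since `c_p' = ξ_p c_p`, the moments satisfy `J_{a,b}' = β_a β_b` and `β_a' = β_{a+1}`. Write `J_k`
for the `k × k` bimoment matrix, `b_k` for the vector `(β_j, …, β_{j+k-1})` and
`x_k = adj(J_k) b_k`. As `J_k` moves in the rank-one direction `b_k b_kᵀ`, Jacobi's formula gives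
`τ_k' = b_kᵀ x_k`; moving along `b_k b_kᵀ` does not change `adj(J_k) b_k`, whence
`τ_k'' = 2 b_k'ᵀ x_k`. By Cramer's rule the last entry of `x_k` is `(-1)^(k-1) σ_k`.

Both identities come from the relation `J_{k+1} (x_k, 0)ᵀ = τ_k b_{k+1} - (x_{k+1})_last e_last`.
Pairing it with `x_{k+1}` gives the first. Dropping its first row gives
`B x_k = τ_k b_k' - (x_{k+1})_last e_last` for the matrix `B` of the `J_{a+1,b}`; as
`B + Bᵀ = b_k b_kᵀ`, pairing this with `x_k` gives the second.
-/

open Matrix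

section Algebra

variable {R : Type*} [CommRing R]

theorem dotProduct_cramer {ι : Type*} [Fintype ι] [DecidableEq ι] (A : Matrix ι ι R)
    (u v : ι → R) : v ⬝ᵥ A.cramer u = Aᵀ.cramer v ⬝ᵥ u := by
  rw [cramer_eq_adjugate_mulVec, cramer_eq_adjugate_mulVec, ← adjugate_transpose,
    mulVec_transpose, dotProduct_mulVec]

theorem two_mul_dotProduct_mulVec_self {ι : Type*} [Fintype ι] {B : Matrix ι ι R} {b : ι → R}
    (hB : B + Bᵀ = vecMulVec b b) (x : ι → R) : 2 * (x ⬝ᵥ B *ᵥ x) = (b ⬝ᵥ x) ^ 2 := by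
  have hT : x ⬝ᵥ Bᵀ *ᵥ x = x ⬝ᵥ B *ᵥ x := by
    rw [mulVec_transpose, dotProduct_comm, dotProduct_mulVec]
  calc 2 * (x ⬝ᵥ B *ᵥ x) = x ⬝ᵥ (B + Bᵀ) *ᵥ x := by
        rw [add_mulVec, dotProduct_add, hT, two_mul]
    _ = (b ⬝ᵥ x) ^ 2 := by
        rw [hB, vecMulVec_mulVec, dotProduct_smul, dotProduct_comm x b, sq]
        simp

variable {m : ℕ} (A : Matrix (Fin (m + 1)) (Fin (m + 1)) R)

theorem adjugate_last_last :
    A.adjugate (Fin.last m) (Fin.last m) = (A.submatrix Fin.castSucc Fin.castSucc).det := by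
  simp [adjugate_fin_succ_eq_det_submatrix, Fin.succAbove_last, ← two_mul]

theorem adjugate_last_castSucc (i : Fin m) :
    A.adjugate (Fin.last m) i.castSucc =
      -(A.submatrix Fin.castSucc Fin.castSucc)ᵀ.cramer (Fin.init (A (Fin.last m))) i := by
  set e := Equiv.swap i.castSucc (Fin.last m) with he
  have hswap : (A.updateRow i.castSucc (Pi.single (Fin.last m) 1)).submatrix e id =
      (A.submatrix e id).updateRow (Fin.last m) (Pi.single (Fin.last m) 1) := by
    simpa [he] using submatrix_updateRow_equiv A i.castSucc (Pi.single (Fin.last m) 1) e (.refl _)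
  have hminor : (A.submatrix e id).submatrix Fin.castSucc Fin.castSucc =
      (A.submatrix Fin.castSucc Fin.castSucc).updateRow i (Fin.init (A (Fin.last m))) := by
    ext r s
    obtain rfl | hr := eq_or_ne r i
    · simp [he, Fin.init]
    · simp [he, hr, Equiv.swap_apply_of_ne_of_ne, (Fin.castSucc_lt_last r).ne]
  have hdet := det_permute e (A.updateRow i.castSucc (Pi.single (Fin.last m) 1))
  rw [hswap, ← adjugate_apply, adjugate_last_last, hminor,
    Equiv.Perm.sign_swap (Fin.castSucc_lt_last i).ne, ← adjugate_apply] at hdet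
  rw [cramer_transpose_apply, hdet]
  simp

theorem cramer_last (u : Fin (m + 1) → R) :
    A.cramer u (Fin.last m) =
      u (Fin.last m) * (A.submatrix Fin.castSucc Fin.castSucc).det -
        Fin.init (A (Fin.last m)) ⬝ᵥ
          (A.submatrix Fin.castSucc Fin.castSucc).cramer (Fin.init u) := by
  rw [dotProduct_cramer, cramer_eq_adjugate_mulVec, mulVec, dotProduct, Fin.sum_univ_castSucc,
    adjugate_last_last]
  simp only [adjugate_last_castSucc, dotProduct, neg_mul, sum_neg_distrib, Fin.init]
  ring

theorem mulVec_snoc_cramer (u : Fin (m + 1) → R) :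
    A *ᵥ Fin.snoc (α := fun _ => R)
        ((A.submatrix Fin.castSucc Fin.castSucc).cramer (Fin.init u)) 0 =
      (A.submatrix Fin.castSucc Fin.castSucc).det • u -
        Pi.single (Fin.last m) (A.cramer u (Fin.last m)) := by
  ext r
  simp only [mulVec, dotProduct, Fin.sum_univ_castSucc, Fin.snoc_castSucc, Fin.snoc_last, mul_zero,
    add_zero]
  cases r using Fin.lastCases with
  | last =>
    simp [cramer_last, dotProduct, Fin.init, mul_comm]
  | cast r =>
    rw [Pi.sub_apply, Pi.single_eq_of_ne (Fin.castSucc_lt_last r).ne, sub_zero]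
    exact congrFun (mulVec_cramer (A.submatrix Fin.castSucc Fin.castSucc) (Fin.init u)) r

theorem dotProduct_cramer_mul_det_sub (u v : Fin (m + 1) → R) :
    v ⬝ᵥ A.cramer u * (A.submatrix Fin.castSucc Fin.castSucc).det -
        A.det * (Fin.init v ⬝ᵥ (A.submatrix Fin.castSucc Fin.castSucc).cramer (Fin.init u)) =
      A.cramer u (Fin.last m) * Aᵀ.cramer v (Fin.last m) := by
  have hleft : Aᵀ.cramer v ᵥ* A = A.det • v := by
    rw [← mulVec_transpose, mulVec_cramer, det_transpose]
  have h := congrArg (Aᵀ.cramer v ⬝ᵥ ·) (mulVec_snoc_cramer A u)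
  simp only [dotProduct_mulVec, hleft, smul_dotProduct, dotProduct_sub, dotProduct_smul,
    ← dotProduct_cramer, dotProduct_single, smul_eq_mul] at h
  have hsnoc (w : Fin m → R) :
      v ⬝ᵥ (Fin.snoc (α := fun _ => R) w 0 : Fin (m + 1) → R) = Fin.init v ⬝ᵥ w := by
    simp [dotProduct, Fin.sum_univ_castSucc, Fin.init]
  rw [hsnoc] at h
  linear_combination -h

end Algebra

section Derivative

variable {𝕜 ι : Type*} [NontriviallyNormedField 𝕜] [Fintype ι] [DecidableEq ι]
  {A : 𝕜 → Matrix ι ι 𝕜} {u v : 𝕜 → ι → 𝕜} {u' v' : ι → 𝕜} {t : 𝕜}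

theorem hasDerivAt_det {A' : Matrix ι ι 𝕜}
    (hA : ∀ i j, HasDerivAt (fun s => A s i j) (A' i j) t) :
    HasDerivAt (fun s => (A s).det) (trace ((A t).adjugate * A')) t := by
  have htrace : trace ((A t).adjugate * A') = ∑ l, ((A t).updateCol l (A'.col l)).det := by
    simp only [← cramer_apply, cramer_eq_adjugate_mulVec]
    rfl
  simp only [htrace, det_apply']
  rw [sum_comm]
  refine .fun_sum fun σ _ => ?_
  rw [← mul_sum]
  refine .const_mul _ ((HasDerivAt.fun_finsetProd fun i _ => hA (σ i) i).congr_deriv ?_)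
  refine sum_congr rfl fun l _ => ?_
  rw [← prod_erase_mul _ _ (mem_univ l), smul_eq_mul, updateCol_self]
  congr 1
  exact prod_congr rfl fun i hi => by rw [updateCol_ne (ne_of_mem_erase hi)]

theorem hasDerivAt_det_of_vecMulVec
    (hA : ∀ i j, HasDerivAt (fun s => A s i j) (u t i * v t j) t) :
    HasDerivAt (fun s => (A s).det) (v t ⬝ᵥ (A t).cramer (u t)) t := by
  refine (hasDerivAt_det (A' := vecMulVec (u t) (v t)) hA).congr_deriv ?_
  rw [mul_vecMulVec, trace_vecMulVec, ← cramer_eq_adjugate_mulVec, dotProduct_comm]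

theorem hasDerivAt_cramer_of_vecMulVec
    (hA : ∀ i j, HasDerivAt (fun s => A s i j) (u t i * v t j) t)
    (hu : ∀ i, HasDerivAt (fun s => u s i) (u' i) t) (i : ι) :
    HasDerivAt (fun s => (A s).cramer (u s) i) ((A t).cramer u' i) t := by
  set M := (A t).updateCol i (u t) with hM
  set M' := vecMulVec (u t) (Function.update (v t) i 0) + vecMulVec u' (Pi.single i 1) with hM'
  have hderiv (a b) : HasDerivAt (fun s => (A s).updateCol i (u s) a b) (M' a b) t := by
    obtain rfl | hb := eq_or_ne b i
    · simpa [hM', vecMulVec_apply] using hu a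
    · simpa [hM', vecMulVec_apply, hb] using hA a b
  have hMu : M.cramer (u t) = Pi.single i M.det :=
    cramer_row_self _ _ _ fun a => by simp [hM]
  have hMu' : M.cramer u' i = (A t).cramer u' i := by
    rw [hM, cramer_apply, cramer_apply, updateCol_idem]
  simp only [cramer_apply (A _) (u _)]
  refine (hasDerivAt_det hderiv).congr_deriv ?_
  rw [hM', mul_add, trace_add, mul_vecMulVec, mul_vecMulVec, trace_vecMulVec, trace_vecMulVec,
    ← cramer_eq_adjugate_mulVec, ← cramer_eq_adjugate_mulVec, hMu]
  simp [← hM, hMu']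

theorem hasDerivAt_dotProduct_cramer_of_vecMulVec
    (hA : ∀ i j, HasDerivAt (fun s => A s i j) (u t i * v t j) t)
    (hu : ∀ i, HasDerivAt (fun s => u s i) (u' i) t)
    (hv : ∀ i, HasDerivAt (fun s => v s i) (v' i) t) :
    HasDerivAt (fun s => v s ⬝ᵥ (A s).cramer (u s))
      (v' ⬝ᵥ (A t).cramer (u t) + v t ⬝ᵥ (A t).cramer u') t := by
  simp only [dotProduct, ← sum_add_distrib]
  exact .fun_sum fun i _ => (hv i).fun_mul (hasDerivAt_cramer_of_vecMulVec hA hu i)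

end Derivative

section Moments

variable {R : Type*} {J : ℤ → ℤ → R} {β : ℤ → R}

/-- The `k × k` block `(J_{i+r,j+s})_{0 ≤ r,s < k}` of a bimoment array, with determinant
`τ_k^{(i,j)}`. -/
def bimomentMatrix (J : ℤ → ℤ → R) (i j : ℤ) (k : ℕ) : Matrix (Fin k) (Fin k) R :=
  .of fun r s => J (i + (r : ℕ)) (j + (s : ℕ))

/-- The segment `(β_i, …, β_{i+k-1})` of a moment sequence. -/
def momentVector (β : ℤ → R) (i : ℤ) (k : ℕ) : Fin k → R :=
  fun r => β (i + (r : ℕ))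

theorem bimomentMatrix_submatrix_castSucc (J : ℤ → ℤ → R) (i j : ℤ) (k : ℕ) :
    (bimomentMatrix J i j (k + 1)).submatrix Fin.castSucc Fin.castSucc = bimomentMatrix J i j k :=
  rfl

theorem init_momentVector (β : ℤ → R) (i : ℤ) (k : ℕ) :
    Fin.init (momentVector β i (k + 1)) = momentVector β i k :=
  rfl

theorem bimomentMatrix_isSymm (hJ : ∀ a b, J a b = J b a) (j : ℤ) (k : ℕ) :
    (bimomentMatrix J j j k).IsSymm :=
  IsSymm.ext fun _ _ => hJ _ _

theorem momentVector_add_one (β : ℤ → R) (i : ℤ) (k : ℕ) (r : Fin k) :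
    momentVector β (i + 1) k r = momentVector β i (k + 1) r.succ := by
  simp [momentVector, add_assoc, add_comm (1 : ℤ)]

theorem bimomentMatrix_add_one (J : ℤ → ℤ → R) (i j : ℤ) (k : ℕ) (r s : Fin k) :
    bimomentMatrix J (i + 1) j k r s = bimomentMatrix J i j (k + 1) r.succ s.castSucc := by
  simp [bimomentMatrix, add_assoc, add_comm (1 : ℤ)]

variable [CommRing R]

theorem bimomentMatrix_add_one_mulVec_cramer (J : ℤ → ℤ → R) (β : ℤ → R) (i j : ℤ) (m : ℕ) :
    bimomentMatrix J (i + 1) j (m + 1) *ᵥ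
        (bimomentMatrix J i j (m + 1)).cramer (momentVector β i (m + 1)) =
      (bimomentMatrix J i j (m + 1)).det • momentVector β (i + 1) (m + 1) -
        Pi.single (Fin.last m)
          ((bimomentMatrix J i j (m + 2)).cramer (momentVector β i (m + 2)) (Fin.last _)) := by
  ext r
  have h := congrFun (mulVec_snoc_cramer (bimomentMatrix J i j (m + 2))
    (momentVector β i (m + 2))) r.succ
  rw [bimomentMatrix_submatrix_castSucc, init_momentVector, mulVec, dotProduct,
    Fin.sum_univ_castSucc, Fin.snoc_last, mul_zero, add_zero] at h
  simpa [mulVec, dotProduct, bimomentMatrix_add_one, momentVector_add_one, Pi.single_apply,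
    ← Fin.succ_last] using h

theorem two_mul_det_mul_dotProduct_cramer_sub_sq (hsymm : ∀ a b, J a b = J b a)
    (hshift : ∀ a b, J (a + 1) b + J a (b + 1) = β a * β b) (j : ℤ) (m : ℕ) :
    2 * (bimomentMatrix J j j (m + 1)).det * (momentVector β (j + 1) (m + 1) ⬝ᵥ
          (bimomentMatrix J j j (m + 1)).cramer (momentVector β j (m + 1))) -
        (momentVector β j (m + 1) ⬝ᵥ
          (bimomentMatrix J j j (m + 1)).cramer (momentVector β j (m + 1))) ^ 2 =
      2 * (bimomentMatrix J j j (m + 1)).cramer (momentVector β j (m + 1)) (Fin.last _) *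
        (bimomentMatrix J j j (m + 2)).cramer (momentVector β j (m + 2)) (Fin.last _) := by
  have hB : bimomentMatrix J (j + 1) j (m + 1) + (bimomentMatrix J (j + 1) j (m + 1))ᵀ =
      vecMulVec (momentVector β j (m + 1)) (momentVector β j (m + 1)) := by
    ext r s
    simp only [bimomentMatrix, momentVector, Matrix.add_apply, transpose_apply, of_apply,
      vecMulVec_apply, ← hshift, add_right_comm j 1]
    rw [hsymm (j + (s : ℕ) + 1)]
  have hq := two_mul_dotProduct_mulVec_self hB
    ((bimomentMatrix J j j (m + 1)).cramer (momentVector β j (m + 1)))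
  rw [bimomentMatrix_add_one_mulVec_cramer, dotProduct_sub, dotProduct_smul, dotProduct_single,
    dotProduct_comm _ (momentVector β (j + 1) _), smul_eq_mul] at hq
  linear_combination hq

end Moments

section ExponentialWeights

variable {n : ℕ} (ξ c c0 : Fin n → ℝ)

theorem Jmom_comm (a b : ℤ) : Jmom n ξ c a b = Jmom n ξ c b a := by
  rw [Jmom, sum_comm]
  refine sum_congr rfl fun p _ => sum_congr rfl fun q _ => ?_
  ring

theorem betaM_mul_betaM (a b : ℤ) :
    betaM n ξ c a * betaM n ξ c b = ∑ p, ∑ q, ξ p ^ a * ξ q ^ b * (c p * c q) := by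
  simp only [betaM, sum_mul_sum, mul_mul_mul_comm]

theorem hasDerivAt_cT (p : Fin n) (t : ℝ) :
    HasDerivAt (fun s => cT n ξ c0 s p) (ξ p * cT n ξ c0 t p) t := by
  refine (((hasDerivAt_id t).const_mul (ξ p)).exp.const_mul (c0 p)).congr_deriv ?_
  simp only [cT, id_eq]
  ring

theorem tauDet_natCast (i j : ℤ) (k : ℕ) :
    tauDet n ξ c i j k = (bimomentMatrix (Jmom n ξ c) i j k).det := by
  rw [tauDet, if_neg (by lia)]
  rfl

theorem sigmaDet_natCast (i j : ℤ) (m : ℕ) :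
    sigmaDet n ξ c i j (m + 1 : ℕ) =
      (-1) ^ m * (bimomentMatrix (Jmom n ξ c) i j (m + 1)).cramer
        (momentVector (betaM n ξ c) i (m + 1)) (Fin.last m) := by
  rw [sigmaDet, if_neg (by lia)]
  set S : Matrix (Fin (m + 1)) (Fin (m + 1)) ℝ := .of fun r s =>
    if (s : ℕ) = 0 then betaM n ξ c (i + (r : ℕ))
    else Jmom n ξ c (i + (r : ℕ)) (j + ((s : ℕ) - 1 : ℕ)) with hS
  have hrotate : S.submatrix id (finRotate (m + 1)) =
      (bimomentMatrix (Jmom n ξ c) i j (m + 1)).updateCol (Fin.last m)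
        (momentVector (betaM n ξ c) i (m + 1)) := by
    ext r s
    rw [submatrix_apply, hS, of_apply, coe_finRotate]
    obtain rfl | hs := eq_or_ne s (Fin.last m)
    · simp [momentVector]
    · simp [hs, bimomentMatrix]
  rw [cramer_apply, ← hrotate, det_permute', sign_finRotate]
  change S.det = _
  simp [← mul_assoc, ← mul_pow]

theorem sigmaDet_sq (j : ℤ) (m : ℕ) :
    sigmaDet n ξ c j j (m + 1 : ℕ) ^ 2 =
      momentVector (betaM n ξ c) j (m + 1) ⬝ᵥ (bimomentMatrix (Jmom n ξ c) j j (m + 1)).cramer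
          (momentVector (betaM n ξ c) j (m + 1)) * tauDet n ξ c j j m -
        tauDet n ξ c j j (m + 1 : ℕ) * (momentVector (betaM n ξ c) j m ⬝ᵥ
          (bimomentMatrix (Jmom n ξ c) j j m).cramer (momentVector (betaM n ξ c) j m)) := by
  have h := dotProduct_cramer_mul_det_sub (bimomentMatrix (Jmom n ξ c) j j (m + 1))
    (momentVector (betaM n ξ c) j (m + 1)) (momentVector (betaM n ξ c) j (m + 1))
  rw [(bimomentMatrix_isSymm (Jmom_comm ξ c) j (m + 1)).eq, bimomentMatrix_submatrix_castSucc,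
    init_momentVector] at h
  rw [sigmaDet_natCast, mul_pow, ← pow_mul, pow_mul', neg_one_sq, one_pow, one_mul, sq, ← h,
    tauDet_natCast, tauDet_natCast]

variable {ξ}

theorem Jmom_add_one_add (hξ : ∀ p q, ξ p + ξ q ≠ 0) (a b : ℤ) :
    Jmom n ξ c (a + 1) b + Jmom n ξ c a (b + 1) = betaM n ξ c a * betaM n ξ c b := by
  simp only [betaM_mul_betaM, Jmom, ← sum_add_distrib]
  refine sum_congr rfl fun p _ => sum_congr rfl fun q _ => ?_
  have hpq := hξ p q
  have hne (p) : ξ p ≠ 0 := add_self_eq_zero.not.mp (hξ p p)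
  rw [zpow_add_one₀ (hne p), zpow_add_one₀ (hne q)]
  field_simp

theorem neg_two_mul_sigmaDet_mul_sigmaDet (hξ : ∀ p q, ξ p + ξ q ≠ 0) (j : ℤ) (m : ℕ) :
    -2 * sigmaDet n ξ c j j (m + 2 : ℕ) * sigmaDet n ξ c j j (m + 1 : ℕ) =
      2 * (momentVector (betaM n ξ c) (j + 1) (m + 1) ⬝ᵥ
          (bimomentMatrix (Jmom n ξ c) j j (m + 1)).cramer
            (momentVector (betaM n ξ c) j (m + 1))) * tauDet n ξ c j j (m + 1 : ℕ) -
        (momentVector (betaM n ξ c) j (m + 1) ⬝ᵥ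
          (bimomentMatrix (Jmom n ξ c) j j (m + 1)).cramer
            (momentVector (betaM n ξ c) j (m + 1))) ^ 2 := by
  have h := two_mul_det_mul_dotProduct_cramer_sub_sq (Jmom_comm ξ c) (Jmom_add_one_add c hξ) j m
  have hsign : (-1 : ℝ) ^ (m + 1) * (-1) ^ m = -1 := by
    rw [pow_succ, mul_right_comm, ← mul_pow]
    simp
  rw [sigmaDet_natCast, sigmaDet_natCast, mul_assoc, mul_mul_mul_comm, hsign, tauDet_natCast]
  linear_combination -h

theorem hasDerivAt_betaM_cT (hξ : ∀ p, ξ p ≠ 0) (a : ℤ) (t : ℝ) :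
    HasDerivAt (fun s => betaM n ξ (cT n ξ c0 s) a) (betaM n ξ (cT n ξ c0 t) (a + 1)) t := by
  refine .fun_sum fun p _ => ((hasDerivAt_cT ξ c0 p t).const_mul _).congr_deriv ?_
  rw [zpow_add_one₀ (hξ p), mul_assoc]

theorem hasDerivAt_Jmom_cT (hξ : ∀ p q, ξ p + ξ q ≠ 0) (a b : ℤ) (t : ℝ) :
    HasDerivAt (fun s => Jmom n ξ (cT n ξ c0 s) a b)
      (betaM n ξ (cT n ξ c0 t) a * betaM n ξ (cT n ξ c0 t) b) t := by
  rw [betaM_mul_betaM]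
  refine .fun_sum fun p _ => .fun_sum fun q _ =>
    (((hasDerivAt_cT ξ c0 p t).fun_mul (hasDerivAt_cT ξ c0 q t)).const_mul _).congr_deriv ?_
  have hpq := hξ p q
  field_simp

theorem hasDerivAt_momentVector_cT (hξ : ∀ p, ξ p ≠ 0) (i : ℤ) (k : ℕ) (t : ℝ) (r : Fin k) :
    HasDerivAt (fun s => momentVector (betaM n ξ (cT n ξ c0 s)) i k r)
      (momentVector (betaM n ξ (cT n ξ c0 t)) (i + 1) k r) t := by
  simpa only [momentVector, add_right_comm] using hasDerivAt_betaM_cT c0 hξ (i + (r : ℕ)) t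

theorem hasDerivAt_bimomentMatrix_cT (hξ : ∀ p q, ξ p + ξ q ≠ 0) (i j : ℤ) (k : ℕ) (t : ℝ)
    (r s : Fin k) :
    HasDerivAt (fun x => bimomentMatrix (Jmom n ξ (cT n ξ c0 x)) i j k r s)
      (momentVector (betaM n ξ (cT n ξ c0 t)) i k r *
        momentVector (betaM n ξ (cT n ξ c0 t)) j k s) t :=
  hasDerivAt_Jmom_cT c0 hξ (i + (r : ℕ)) (j + (s : ℕ)) t

theorem hasDerivAt_tauDet_cT (hξ : ∀ p q, ξ p + ξ q ≠ 0) (i j : ℤ) (k : ℕ) (t : ℝ) :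
    HasDerivAt (fun s => tauDet n ξ (cT n ξ c0 s) i j k)
      (momentVector (betaM n ξ (cT n ξ c0 t)) j k ⬝ᵥ
        (bimomentMatrix (Jmom n ξ (cT n ξ c0 t)) i j k).cramer
          (momentVector (betaM n ξ (cT n ξ c0 t)) i k)) t := by
  simp only [tauDet_natCast]
  exact hasDerivAt_det_of_vecMulVec
    (u := fun s => momentVector (betaM n ξ (cT n ξ c0 s)) i k)
    (v := fun s => momentVector (betaM n ξ (cT n ξ c0 s)) j k)
    (hasDerivAt_bimomentMatrix_cT c0 hξ i j k t)

theorem hasDerivAt_deriv_tauDet_cT (hξ : ∀ p q, ξ p + ξ q ≠ 0) (j : ℤ) (k : ℕ) (t : ℝ) :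
    HasDerivAt (deriv fun s => tauDet n ξ (cT n ξ c0 s) j j k)
      (2 * (momentVector (betaM n ξ (cT n ξ c0 t)) (j + 1) k ⬝ᵥ
        (bimomentMatrix (Jmom n ξ (cT n ξ c0 t)) j j k).cramer
          (momentVector (betaM n ξ (cT n ξ c0 t)) j k))) t := by
  have hβ := hasDerivAt_momentVector_cT c0 (fun p => add_self_eq_zero.not.mp (hξ p p)) j k t
  have hsymm := bimomentMatrix_isSymm (Jmom_comm ξ (cT n ξ c0 t)) j k
  rw [funext fun s => (hasDerivAt_tauDet_cT c0 hξ j j k s).deriv]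
  refine (hasDerivAt_dotProduct_cramer_of_vecMulVec
    (hasDerivAt_bimomentMatrix_cT c0 hξ j j k t) hβ hβ).congr_deriv ?_
  rw [dotProduct_cramer _ (momentVector _ (j + 1) k), hsymm.eq, dotProduct_comm, two_mul]

end ExponentialWeights

theorem stmt_16_general (n : ℕ) (ξ c0 : Fin n → ℝ) (hξ : ∀ p q, ξ p + ξ q ≠ 0)
    (j k : ℤ) (hk : 1 ≤ k) (t : ℝ) :
    deriv (fun s => tauDet n ξ (cT n ξ c0 s) j j k) t * tauDet n ξ (cT n ξ c0 t) j j (k - 1) -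
        tauDet n ξ (cT n ξ c0 t) j j k * deriv (fun s => tauDet n ξ (cT n ξ c0 s) j j (k - 1)) t =
      (sigmaDet n ξ (cT n ξ c0 t) j j k) ^ 2 ∧
    deriv (deriv (fun s => tauDet n ξ (cT n ξ c0 s) j j k)) t * tauDet n ξ (cT n ξ c0 t) j j k -
        (deriv (fun s => tauDet n ξ (cT n ξ c0 s) j j k) t) ^ 2 =
      -2 * sigmaDet n ξ (cT n ξ c0 t) j j (k + 1) * sigmaDet n ξ (cT n ξ c0 t) j j k := by
  obtain ⟨m, rfl⟩ : ∃ m : ℕ, k = (m + 1 : ℕ) := ⟨(k - 1).toNat, by lia⟩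
  have hpred : ((m + 1 : ℕ) : ℤ) - 1 = m := by simp
  have hsucc : ((m + 1 : ℕ) : ℤ) + 1 = (m + 2 : ℕ) := rfl
  have hderiv (k : ℕ) := (hasDerivAt_tauDet_cT c0 hξ j j k t).deriv
  rw [hpred, hsucc, hderiv, hderiv, (hasDerivAt_deriv_tauDet_cT c0 hξ j (m + 1) t).deriv]
  exact ⟨(sigmaDet_sq ξ _ j m).symm, (neg_two_mul_sigmaDet_mul_sigmaDet _ hξ j m).symm⟩

/-- Corollary 3.3: under `c_p(t) = c_p(0) e^{ξ_p t}`, for all `j ∈ ℤ`, `k ≥ 1`, `t ∈ ℝ`: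
`(d/dt τ_k^{(j,j)}) τ_{k-1}^{(j,j)} - τ_k^{(j,j)} (d/dt τ_{k-1}^{(j,j)}) = (σ_k^{(j,j)})²` and
`(d²/dt² τ_k^{(j,j)}) τ_k^{(j,j)} - (d/dt τ_k^{(j,j)})² = -2 σ_{k+1}^{(j,j)} σ_k^{(j,j)}`. -/
theorem stmt_16 (n : ℕ) (hn : 1 ≤ n) (ξ c0 : Fin n → ℝ)
    (hξ0 : ∀ p, 0 < ξ p) (hξmono : StrictMono ξ) (hc : ∀ p, 0 < c0 p)
    (j k : ℤ) (hk : 1 ≤ k) (t : ℝ) :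
    deriv (fun s => tauDet n ξ (cT n ξ c0 s) j j k) t * tauDet n ξ (cT n ξ c0 t) j j (k - 1) -
        tauDet n ξ (cT n ξ c0 t) j j k * deriv (fun s => tauDet n ξ (cT n ξ c0 s) j j (k - 1)) t =
      (sigmaDet n ξ (cT n ξ c0 t) j j k) ^ 2 ∧
    deriv (deriv (fun s => tauDet n ξ (cT n ξ c0 s) j j k)) t * tauDet n ξ (cT n ξ c0 t) j j k -
        (deriv (fun s => tauDet n ξ (cT n ξ c0 s) j j k) t) ^ 2 =
      -2 * sigmaDet n ξ (cT n ξ c0 t) j j (k + 1) * sigmaDet n ξ (cT n ξ c0 t) j j k :=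
  stmt_16_general n ξ c0 (fun p q => (add_pos (hξ0 p) (hξ0 q)).ne') j k hk t
end
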